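/- Let E be an interval of ℝ. A function f : E → ℝ is p-quasi-Cauchy continuous on E for some positive integer p if and only if f is slowly oscillating continuous on E. -/

import Mathlib

open Filter Topology

/-- A real sequence `x` is `p`-quasi-Cauchy if `x (n + p) - x n → 0`. -/
def PQuasiCauchy (p : ℕ) (x : ℕ → ℝ) : Prop :=
  Tendsto (fun n => x (n + p) - x n) atTop (𝓝 0)

/-- A function `f` is `p`-quasi-Cauchy continuous on `E` if it maps `p`-quasi-Cauchy
sequences of points in `E` to `p`-quasi-Cauchy sequences. -/
def PQuasiCauchyContinuousOn (p : ℕ) (f : ℝ → ℝ) (E : Set ℝ) : Prop :=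
  ∀ x : ℕ → ℝ, (∀ n, x n ∈ E) → PQuasiCauchy p x → PQuasiCauchy p (fun n => f (x n))

/-- A real sequence `x` is slowly oscillating if for every `ε > 0` there exist `δ > 0`
and a positive integer `N` such that `|x m - x n| < ε` whenever `N ≤ n`, `n ≤ m`, and
`m ≤ (1 + δ) * n`. -/
def SlowlyOscillating (x : ℕ → ℝ) : Prop :=
  ∀ ε : ℝ, 0 < ε → ∃ δ : ℝ, 0 < δ ∧ ∃ N : ℕ, 0 < N ∧
    ∀ n m : ℕ, N ≤ n → n ≤ m → (m : ℝ) ≤ (1 + δ) * n → |x m - x n| < ε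

/-- A function `f` is slowly oscillating continuous on `E` if it maps slowly oscillating
sequences of points in `E` to slowly oscillating sequences. -/
def SlowlyOscillatingContinuousOn (f : ℝ → ℝ) (E : Set ℝ) : Prop :=
  ∀ x : ℕ → ℝ, (∀ n, x n ∈ E) → SlowlyOscillating x →
    SlowlyOscillating (fun n => f (x n))

/-- Move `y` towards `a` by a distance at most `h`. -/
def moveTowards (y a h : ℝ) : ℝ :=
  max (y - h) (min (y + h) a)

lemma abs_moveTowards_sub_le {y a h : ℝ} (hh : 0 ≤ h) : |moveTowards y a h - y| ≤ h := by
  unfold moveTowards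
  rw [abs_le]
  constructor
  · linarith [le_max_left (y - h) (min (y + h) a)]
  · have : max (y - h) (min (y + h) a) ≤ y + h := max_le (by linarith) (min_le_left _ _)
    linarith

lemma moveTowards_mem_uIcc {y a h : ℝ} (hh : 0 ≤ h) : moveTowards y a h ∈ Set.uIcc y a := by
  unfold moveTowards
  rw [Set.mem_uIcc]
  grind

lemma moveTowards_eq_or {y a h : ℝ} (hh : 0 ≤ h) :
    moveTowards y a h = a ∨ |moveTowards y a h - a| ≤ |y - a| - h := by
  unfold moveTowards
  grind

/-- The state (position, index of the current target) of a point that runs through the targets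
`a 0, a 1, …` in order, moving by at most `1 / (n + 1)` at time `n`. -/
noncomputable def pursuit (a : ℕ → ℝ) : ℕ → ℝ × ℕ
  | 0 => (a 0, 0)
  | n + 1 =>
    if (pursuit a n).1 = a (pursuit a n).2 then ((pursuit a n).1, (pursuit a n).2 + 1)
    else (moveTowards (pursuit a n).1 (a (pursuit a n).2) (1 / ((n : ℝ) + 1)), (pursuit a n).2)

section Pursuit

variable (a : ℕ → ℝ)

lemma pursuit_succ_of_eq {n : ℕ} (h : (pursuit a n).1 = a (pursuit a n).2) :
    pursuit a (n + 1) = ((pursuit a n).1, (pursuit a n).2 + 1) := by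
  rw [pursuit, if_pos h]

lemma pursuit_succ_of_ne {n : ℕ} (h : (pursuit a n).1 ≠ a (pursuit a n).2) :
    pursuit a (n + 1) =
      (moveTowards (pursuit a n).1 (a (pursuit a n).2) (1 / ((n : ℝ) + 1)),
        (pursuit a n).2) := by
  rw [pursuit, if_neg h]

lemma abs_pursuit_succ_sub_le (n : ℕ) :
    |(pursuit a (n + 1)).1 - (pursuit a n).1| ≤ 1 / ((n : ℝ) + 1) := by
  have hn : (0 : ℝ) ≤ 1 / ((n : ℝ) + 1) := by positivity
  by_cases h : (pursuit a n).1 = a (pursuit a n).2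
  · simpa [pursuit_succ_of_eq a h] using hn
  · rw [pursuit_succ_of_ne a h]
    exact abs_moveTowards_sub_le hn

lemma pursuit_mem {E : Set ℝ} (hE : Convex ℝ E) (ha : ∀ k, a k ∈ E) (n : ℕ) :
    (pursuit a n).1 ∈ E := by
  induction n with
  | zero => exact ha 0
  | succ n ih =>
    by_cases h : (pursuit a n).1 = a (pursuit a n).2
    · rwa [pursuit_succ_of_eq a h]
    · rw [pursuit_succ_of_ne a h]
      exact hE.ordConnected.uIcc_subset ih (ha _) (moveTowards_mem_uIcc (by positivity))

lemma monotone_pursuit_snd : Monotone fun n => (pursuit a n).2 := by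
  refine monotone_nat_of_le_succ fun n => ?_
  by_cases h : (pursuit a n).1 = a (pursuit a n).2
  · simp [pursuit_succ_of_eq a h]
  · simp [pursuit_succ_of_ne a h]

lemma pursuit_snd_le (n : ℕ) : (pursuit a n).2 ≤ n := by
  induction n with
  | zero => simp [pursuit]
  | succ n ih =>
    by_cases h : (pursuit a n).1 = a (pursuit a n).2
    · simpa [pursuit_succ_of_eq a h] using ih
    · rw [pursuit_succ_of_ne a h]
      exact ih.trans n.le_succ

lemma exists_pursuit_eq_of_snd_eq (n k : ℕ) (hk : (pursuit a n).2 = k) :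
    ∃ m, pursuit a m = (a k, k) := by
  by_contra! hne
  have hbound : ∀ j, (pursuit a (n + j)).2 = k ∧
      |(pursuit a (n + j)).1 - a k| + ∑ i ∈ Finset.range j, 1 / (((n + i : ℕ) : ℝ) + 1) ≤
        |(pursuit a n).1 - a k| := by
    intro j
    induction j with
    | zero => simp [hk]
    | succ j ih =>
      obtain ⟨hj, hsum⟩ := ih
      have h : (pursuit a (n + j)).1 ≠ a (pursuit a (n + j)).2 := fun h =>
        hne (n + j) (Prod.ext (by rw [h, hj]) hj)
      have hs := pursuit_succ_of_ne a h
      rw [hj] at hs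
      have hne' := hne (n + j + 1)
      rw [← add_assoc, Finset.sum_range_succ]
      rw [hs] at hne' ⊢
      refine ⟨rfl, ?_⟩
      rcases moveTowards_eq_or (y := (pursuit a (n + j)).1) (a := a k)
        (h := 1 / (((n + j : ℕ) : ℝ) + 1)) (by positivity) with h | h
      · exact absurd (by rw [h]) hne'
      · dsimp only
        linarith
  have hdiv : Tendsto (fun j => ∑ i ∈ Finset.range j, 1 / (((n + i : ℕ) : ℝ) + 1))
      atTop atTop := by
    refine (not_summable_iff_tendsto_nat_atTop_of_nonneg fun i => by positivity).1 fun h => ?_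
    refine Real.not_summable_one_div_natCast ((summable_nat_add_iff (n + 1)).1 ?_)
    refine h.congr fun i => ?_
    push_cast
    ring
  obtain ⟨j, hj⟩ := (hdiv.eventually_gt_atTop |(pursuit a n).1 - a k|).exists
  linarith [(hbound j).2, abs_nonneg ((pursuit a (n + j)).1 - a k)]

lemma exists_pursuit_eq (k : ℕ) : ∃ m, pursuit a m = (a k, k) := by
  induction k with
  | zero => exact ⟨0, rfl⟩
  | succ k ih =>
    obtain ⟨m, hm⟩ := ih
    refine exists_pursuit_eq_of_snd_eq a (m + 1) (k + 1) ?_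
    rw [pursuit_succ_of_eq a (by rw [hm]), hm]

lemma tendsto_pursuit_snd : Tendsto (fun n => (pursuit a n).2) atTop atTop :=
  tendsto_atTop_atTop_of_monotone (monotone_pursuit_snd a) fun k =>
    let ⟨m, hm⟩ := exists_pursuit_eq a k
    ⟨m, by rw [hm]⟩

end Pursuit

lemma SlowlyOscillating.of_abs_succ_sub_le {x : ℕ → ℝ} {C : ℝ} (hC : 0 < C)
    (hx : ∀ n, |x (n + 1) - x n| ≤ C / ((n : ℝ) + 1)) : SlowlyOscillating x := by
  intro ε hε
  refine ⟨ε / (2 * C), by positivity, 1, one_pos, fun n m hn hnm hm => ?_⟩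
  have hn0 : (0 : ℝ) < n := by exact_mod_cast hn
  have key : ∀ j : ℕ, |x (n + j) - x n| ≤ j * (C / n) := by
    intro j
    induction j with
    | zero => simp
    | succ j ih =>
      have h1 := hx (n + j)
      have h2 : C / (((n + j : ℕ) : ℝ) + 1) ≤ C / n := by
        gcongr
        push_cast
        linarith [(Nat.cast_nonneg j : (0 : ℝ) ≤ j)]
      have h3 := abs_sub_le (x (n + j + 1)) (x (n + j)) (x n)
      rw [← add_assoc]
      push_cast
      linarith
  obtain ⟨j, rfl⟩ := Nat.exists_eq_add_of_le hnm
  have hj : (j : ℝ) ≤ ε / (2 * C) * n := by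
    push_cast at hm
    linarith
  calc |x (n + j) - x n| ≤ j * (C / n) := key j
    _ ≤ ε / (2 * C) * n * (C / n) := by gcongr
    _ = ε / 2 := by field_simp
    _ < ε := by linarith

lemma SlowlyOscillating.of_tendsto_sub {x y : ℕ → ℝ} (hy : SlowlyOscillating y)
    (hxy : Tendsto (fun n => x n - y n) atTop (𝓝 0)) : SlowlyOscillating x := by
  intro ε hε
  obtain ⟨δ, hδ, N, hN, h⟩ := hy (ε / 3) (by positivity)
  obtain ⟨M, hM⟩ := Metric.tendsto_atTop.1 hxy (ε / 3) (by positivity)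
  refine ⟨δ, hδ, max N M, lt_max_of_lt_left hN, fun n m hn hnm hm => ?_⟩
  have h1 := h n m (le_of_max_le_left hn) hnm hm
  have h2 := hM n (le_of_max_le_right hn)
  have h3 := hM m ((le_of_max_le_right hn).trans hnm)
  rw [Real.dist_eq, sub_zero, abs_lt] at h2 h3
  rw [abs_lt] at h1 ⊢
  constructor <;> linarith [h1.1, h1.2, h2.1, h2.2, h3.1, h3.2]

lemma SlowlyOscillating.pQuasiCauchy_one {x : ℕ → ℝ} (hx : SlowlyOscillating x) :
    PQuasiCauchy 1 x := by
  refine Metric.tendsto_atTop.2 fun ε hε => ?_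
  obtain ⟨δ, hδ, N, -, h⟩ := hx ε hε
  obtain ⟨M, hM⟩ := exists_nat_gt (1 / δ)
  refine ⟨max N M, fun n hn => ?_⟩
  rw [Real.dist_eq, sub_zero]
  refine h n (n + 1) (le_of_max_le_left hn) n.le_succ ?_
  have hMn : (M : ℝ) ≤ n := by exact_mod_cast le_of_max_le_right hn
  have : 1 < n * δ := (div_lt_iff₀ hδ).1 (hM.trans_le hMn)
  push_cast
  linarith

/-- Pairs of points of a convex set with distances tending to zero occur as consecutive terms,
arbitrarily far out, of a slowly oscillating sequence of the set. -/
lemma exists_slowlyOscillating_consecutive {E : Set ℝ} (hE : Convex ℝ E) {a b : ℕ → ℝ}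
    (ha : ∀ k, a k ∈ E) (hb : ∀ k, b k ∈ E) (hab : Tendsto (fun k => b k - a k) atTop (𝓝 0)) :
    ∃ x : ℕ → ℝ, (∀ n, x n ∈ E) ∧ SlowlyOscillating x ∧
      ∀ k, ∃ n, k ≤ n ∧ x n = a k ∧ x (n + 1) = b k := by
  let K : ℕ → ℕ := fun n => (pursuit a n).2
  let y : ℕ → ℝ := fun n => (pursuit a n).1
  let x : ℕ → ℝ := fun n =>
    if n % 2 = 1 ∧ y (n / 2) = a (K (n / 2)) then b (K (n / 2)) else y (n / 2)
  have hhalf : Tendsto (fun n : ℕ => n / 2) atTop atTop := Nat.tendsto_div_const_atTop two_ne_zero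
  refine ⟨x, fun n => ?_, ?_, fun k => ?_⟩
  · dsimp only [x]
    split_ifs
    · exact hb _
    · exact pursuit_mem a hE ha _
  · have hy : SlowlyOscillating fun n => y (n / 2) := by
      refine .of_abs_succ_sub_le two_pos fun n => ?_
      rcases Nat.even_or_odd' n with ⟨j, rfl | rfl⟩
      · have : (2 * j + 1) / 2 = 2 * j / 2 := by omega
        rw [this, sub_self, abs_zero]
        positivity
      · have h1 : (2 * j + 1 + 1) / 2 = j + 1 := by omega
        have h2 : (2 * j + 1) / 2 = j := by omega
        rw [h1, h2]
        refine (abs_pursuit_succ_sub_le a j).trans_eq ?_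
        push_cast
        field_simp
        ring
    refine hy.of_tendsto_sub ?_
    have hK : Tendsto (fun n => |b (K (n / 2)) - a (K (n / 2))|) atTop (𝓝 0) := by
      simpa using (hab.comp ((tendsto_pursuit_snd a).comp hhalf)).abs
    refine squeeze_zero_norm (fun n => ?_) hK
    dsimp only [x]
    split_ifs with h
    · rw [h.2, Real.norm_eq_abs]
    · simp
  · obtain ⟨m, hm⟩ := exists_pursuit_eq a k
    have hkm : k ≤ m := by simpa [hm] using pursuit_snd_le a m
    have hdiv : (2 * m + 1) / 2 = m := by omega
    refine ⟨2 * m, by omega, ?_, ?_⟩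
    · simp [x, y, hm]
    · simp [x, y, K, hdiv, hm, Nat.add_mod]

/-- A function on a convex set that maps slowly oscillating sequences to quasi-Cauchy sequences
is uniformly continuous. -/
lemma uniformContinuousOn_of_slowlyOscillating {E : Set ℝ} (hE : Convex ℝ E) {f : ℝ → ℝ}
    (hf : ∀ x : ℕ → ℝ, (∀ n, x n ∈ E) → SlowlyOscillating x →
      PQuasiCauchy 1 fun n => f (x n)) :
    UniformContinuousOn f E := by
  rw [Metric.uniformContinuousOn_iff]
  by_contra! h
  obtain ⟨ε, hε, h⟩ := h
  choose a ha b hb hab hfab using fun k : ℕ => h (1 / ((k : ℝ) + 1)) (by positivity)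
  have hlim : Tendsto (fun k => b k - a k) atTop (𝓝 0) := by
    refine squeeze_zero_norm (fun k => ?_) tendsto_one_div_add_atTop_nhds_zero_nat
    rw [← dist_eq_norm, dist_comm]
    exact (hab k).le
  obtain ⟨x, hxE, hx, hpair⟩ := exists_slowlyOscillating_consecutive hE ha hb hlim
  obtain ⟨N, hN⟩ := Metric.tendsto_atTop.1 (hf x hxE hx) ε hε
  obtain ⟨n, hn, hna, hnb⟩ := hpair N
  have := hN n hn
  beta_reduce at this
  rw [hna, hnb, Real.dist_eq, sub_zero, ← Real.dist_eq, dist_comm] at this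
  exact absurd this (hfab N).not_gt

lemma PQuasiCauchyContinuousOn.one {p : ℕ} (hp : 0 < p) {f : ℝ → ℝ} {E : Set ℝ}
    (hf : PQuasiCauchyContinuousOn p f E) : PQuasiCauchyContinuousOn 1 f E := by
  intro x hxE hx
  have hdiv : Tendsto (fun n : ℕ => n / p) atTop atTop := Nat.tendsto_div_const_atTop hp.ne'
  have hq : PQuasiCauchy p fun n => x (n / p) := by
    refine (hx.comp hdiv).congr fun n => ?_
    simp [Nat.add_div_right n hp]
  have hmul : Tendsto (fun n : ℕ => p * n) atTop atTop := tendsto_id.const_mul_atTop' hp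
  refine ((hf _ (fun n => hxE _) hq).comp hmul).congr fun n => ?_
  simp [Nat.add_div_right _ hp, Nat.mul_div_cancel_left n hp]

lemma UniformContinuousOn.pQuasiCauchyContinuousOn {f : ℝ → ℝ} {E : Set ℝ}
    (hf : UniformContinuousOn f E) (p : ℕ) : PQuasiCauchyContinuousOn p f E := by
  intro x hxE hx
  refine Metric.tendsto_atTop.2 fun ε hε => ?_
  obtain ⟨δ, hδ, h⟩ := Metric.uniformContinuousOn_iff.1 hf ε hε
  obtain ⟨N, hN⟩ := Metric.tendsto_atTop.1 hx δ hδ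
  refine ⟨N, fun n hn => ?_⟩
  have := hN n hn
  rw [Real.dist_eq, sub_zero, ← Real.dist_eq] at this ⊢
  exact h _ (hxE _) _ (hxE _) this

lemma UniformContinuousOn.slowlyOscillatingContinuousOn {f : ℝ → ℝ} {E : Set ℝ}
    (hf : UniformContinuousOn f E) : SlowlyOscillatingContinuousOn f E := by
  intro x hxE hx ε hε
  obtain ⟨η, hη, h⟩ := Metric.uniformContinuousOn_iff.1 hf ε hε
  obtain ⟨δ, hδ, N, hN, hosc⟩ := hx η hη
  exact ⟨δ, hδ, N, hN, fun n m hn hnm hm => h _ (hxE _) _ (hxE _) (hosc n m hn hnm hm)⟩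

/-- On an interval (nonempty convex subset) `E` of `ℝ`, a function `f`
is `p`-quasi-Cauchy continuous on `E` for some positive integer `p` iff `f` is
slowly oscillating continuous on `E`. -/
theorem pQuasiCauchyContinuous_iff_slowlyOscillatingContinuous
    (E : Set ℝ) (hne : E.Nonempty) (hconv : Convex ℝ E) (f : ℝ → ℝ) :
    (∃ p : ℕ, 0 < p ∧ PQuasiCauchyContinuousOn p f E) ↔
      SlowlyOscillatingContinuousOn f E := by
  constructor
  · rintro ⟨p, hp, hf⟩
    exact (uniformContinuousOn_of_slowlyOscillating hconv fun x hxE hx =>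
      hf.one hp x hxE hx.pQuasiCauchy_one).slowlyOscillatingContinuousOn
  · intro hf
    exact ⟨1, one_pos, (uniformContinuousOn_of_slowlyOscillating hconv fun x hxE hx =>
      (hf x hxE hx).pQuasiCauchy_one).pQuasiCauchyContinuousOn 1⟩
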